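/- Lemma 3.2: Let Ω ⊆ ℂⁿ be an open convex set, let K ⊆ ℂⁿ be a compact convex set disjoint from the closure of Ω, let P be a holomorphic polynomial on ℂⁿ, let 0 < δ < ∞ and ε > 0, and let F be a finite set of multi-indices in ℕⁿ. Then there exists a holomorphic polynomial Q on ℂⁿ such that sup_{z ∈ K} ‖Q(z) − P(z)‖ < ε and sup_{z ∈ closure(Ω) ∩ {z : ‖z‖ ≤ δ}} ‖(D^ℓ Q)(z)‖ < ε for all ℓ ∈ F. -/

import Mathlib

open Set Filter Topology

noncomputable section

/-- Evaluation of a multivariate polynomial as a function on `ℂⁿ = Fin n → ℂ`. -/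
def mvEval {n : ℕ} (p : MvPolynomial (Fin n) ℂ) : (Fin n → ℂ) → ℂ :=
  fun z => MvPolynomial.eval z p

/-- The polynomially convex hull of a set in `ℂⁿ`. -/
def polyHull {n : ℕ} (K : Set (Fin n → ℂ)) : Set (Fin n → ℂ) :=
  {z | ∀ p : MvPolynomial (Fin n) ℂ, ‖mvEval p z‖ ≤ sSup ((fun w => ‖mvEval p w‖) '' K)}

/-- A set in `ℂⁿ` is polynomially convex if it equals its polynomially convex hull. -/
def IsPolyConvex {n : ℕ} (K : Set (Fin n → ℂ)) : Prop := polyHull K = K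

/-- The polynomially convex hull of a subset of `ℂ`. -/
def polyHull1 (F : Set ℂ) : Set ℂ :=
  {z | ∀ p : Polynomial ℂ, ‖p.eval z‖ ≤ sSup ((fun w => ‖p.eval w‖) '' F)}

/-- A subset of `ℂ` is polynomially convex if it equals its polynomially convex hull. -/
def IsPolyConvex1 (F : Set ℂ) : Prop := polyHull1 F = F

/-- Partial derivative in the `i`-th coordinate direction. -/
def pd {n : ℕ} (i : Fin n) (f : (Fin n → ℂ) → ℂ) : (Fin n → ℂ) → ℂ :=
  fun z => fderiv ℂ f z (Pi.single i 1)

/-- Iterated partial derivative `D^ℓ = ∂^{ℓ₁+⋯+ℓₙ}/∂z₁^{ℓ₁}⋯∂zₙ^{ℓₙ}`. -/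
def Dml {n : ℕ} (ℓ : Fin n → ℕ) (f : (Fin n → ℂ) → ℂ) : (Fin n → ℂ) → ℂ :=
  (List.finRange n).foldr (fun i g => (pd i)^[ℓ i] g) f

/-- Partial sums `S_λ` of a Taylor-type series around `ζ`, with coefficients computed from a
given family `g` of (extended) partial derivatives: the coefficient of the monomial
`(z-ζ)^{N_j}` is `g (N_j) ζ / (N_{j,1}! ⋯ N_{j,n}!)`. -/
def pSumExt {n : ℕ} (Nj : ℕ → Fin n → ℕ) (g : (Fin n → ℕ) → (Fin n → ℂ) → ℂ)
    (ζ : Fin n → ℂ) (lam : ℕ) : (Fin n → ℂ) → ℂ :=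
  fun z => ∑ j ∈ Finset.range (lam + 1),
    (((∏ i, Nat.factorial (Nj j i) : ℕ) : ℂ))⁻¹ * g (Nj j) ζ * ∏ i, (z i - ζ i) ^ (Nj j i)

/-- Partial sums `S_λ(f,ζ)` of the Taylor development of `f` around `ζ`. -/
def pSum {n : ℕ} (Nj : ℕ → Fin n → ℕ) (f : (Fin n → ℂ) → ℂ)
    (ζ : Fin n → ℂ) (lam : ℕ) : (Fin n → ℂ) → ℂ :=
  pSumExt Nj (fun ℓ => Dml ℓ f) ζ lam

/-- The space `O(Ω)` of holomorphic functions on `Ω`. -/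
def Ospace (n : ℕ) (Ω : Set (Fin n → ℂ)) : Type :=
  {f : (Fin n → ℂ) → ℂ // DifferentiableOn ℂ f Ω}

/-- Topology of uniform convergence on compact subsets of `Ω` on `O(Ω)` (the compact-open
topology induced via restriction to `Ω`). -/
instance (n : ℕ) (Ω : Set (Fin n → ℂ)) : TopologicalSpace (Ospace n Ω) :=
  TopologicalSpace.induced
    (fun f : Ospace n Ω =>
      (⟨Ω.restrict f.1, continuousOn_iff_continuous_restrict.mp f.2.continuousOn⟩ : C(Ω, ℂ)))
    inferInstance

/-- Membership in `A^∞(Ω)`: `f` is holomorphic on `Ω` and each partial derivative `D^ℓ f`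
extends continuously to the closure of `Ω`. -/
def AinfMem (n : ℕ) (Ω : Set (Fin n → ℂ)) (f : (Fin n → ℂ) → ℂ) : Prop :=
  DifferentiableOn ℂ f Ω ∧
    ∀ ℓ : Fin n → ℕ, ∃ g : (Fin n → ℂ) → ℂ,
      ContinuousOn g (closure Ω) ∧ Set.EqOn g (Dml ℓ f) Ω

/-- The space `A^∞(Ω)`. -/
def AinfSpace (n : ℕ) (Ω : Set (Fin n → ℂ)) : Type :=
  {f : (Fin n → ℂ) → ℂ // AinfMem n Ω f}

/-- The chosen continuous extension of `D^ℓ f` to the closure of `Ω`, for `f ∈ A^∞(Ω)`.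
(Its restriction to the closure of `Ω` is uniquely determined.) -/
def AinfExt {n : ℕ} {Ω : Set (Fin n → ℂ)} (f : AinfSpace n Ω) (ℓ : Fin n → ℕ) :
    (Fin n → ℂ) → ℂ :=
  Classical.choose (f.2.2 ℓ)

lemma AinfExt_continuousOn {n : ℕ} {Ω : Set (Fin n → ℂ)} (f : AinfSpace n Ω) (ℓ : Fin n → ℕ) :
    ContinuousOn (AinfExt f ℓ) (closure Ω) :=
  (Classical.choose_spec (f.2.2 ℓ)).1

lemma AinfExt_eqOn {n : ℕ} {Ω : Set (Fin n → ℂ)} (f : AinfSpace n Ω) (ℓ : Fin n → ℕ) :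
    Set.EqOn (AinfExt f ℓ) (Dml ℓ f.1) Ω :=
  (Classical.choose_spec (f.2.2 ℓ)).2

/-- Topology on `A^∞(Ω)`: uniform convergence of every partial derivative on every compact
subset of the closure of `Ω`. -/
instance (n : ℕ) (Ω : Set (Fin n → ℂ)) : TopologicalSpace (AinfSpace n Ω) :=
  TopologicalSpace.induced
    (fun f : AinfSpace n Ω => fun ℓ : Fin n → ℕ =>
      (⟨(closure Ω).restrict (AinfExt f ℓ),
        continuousOn_iff_continuous_restrict.mp (AinfExt_continuousOn f ℓ)⟩ :
          C(closure Ω, ℂ)))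
    inferInstance

/-- A smooth compact curve in `ℂⁿ`: the image of an injective `C^∞` map with
nowhere-vanishing derivative, defined on a compact interval (an arc) or on the
circle (a closed curve, modelled by a 1-periodic map). -/
def IsSmoothCompactCurve {n : ℕ} (K : Set (Fin n → ℂ)) : Prop :=
  ∃ γ : ℝ → (Fin n → ℂ), ContDiff ℝ (⊤ : ℕ∞) γ ∧ (∀ t, deriv γ t ≠ 0) ∧ K = γ '' Set.Icc 0 1 ∧
    (Set.InjOn γ (Set.Icc 0 1) ∨ (Function.Periodic γ 1 ∧ Set.InjOn γ (Set.Ico 0 1)))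

/-- A disjoint union of finitely many smooth compact curves. -/
def IsFiniteUnionOfSmoothCurves {n : ℕ} (K : Set (Fin n → ℂ)) : Prop :=
  ∃ (m : ℕ) (C : Fin m → Set (Fin n → ℂ)),
    (∀ i, IsSmoothCompactCurve (C i)) ∧ Pairwise (Function.onFun Disjoint C) ∧ K = ⋃ i, C i


lemma exists_ratio {E : Type*} [TopologicalSpace E] (T : Set E) (hT : IsCompact T)
    (a b : E → ℂ) (ha : Continuous a) (hb : Continuous b) (h : ∀ z ∈ T, ‖b z‖ < ‖a z‖) :
    ∃ ρ : ℝ, 0 ≤ ρ ∧ ρ < 1 ∧ ∀ z ∈ T, ‖b z‖ ≤ ρ * ‖a z‖ := by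
  rcases T.eq_empty_or_nonempty with rfl | hne
  · exact ⟨0, le_rfl, one_pos, by simp⟩
  have hpos : ∀ z ∈ T, 0 < ‖a z‖ := fun z hz => (norm_nonneg _).trans_lt (h z hz)
  have hc : ContinuousOn (fun z => ‖b z‖ / ‖a z‖) T :=
    hb.norm.continuousOn.div ha.norm.continuousOn (fun z hz => (hpos z hz).ne')
  obtain ⟨x, hx, hmax⟩ := hT.exists_isMaxOn hne hc
  refine ⟨‖b x‖ / ‖a x‖, by positivity, (div_lt_one (hpos x hx)).2 (h x hx), fun z hz => ?_⟩
  exact (div_le_iff₀ (hpos z hz)).1 (hmax hz)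

lemma small_of_eq (N : ℕ) (a b h : ℂ) (ρ : ℝ) (ha : a ≠ 0) (hρ : 0 ≤ ρ) (hb : ‖b‖ ≤ ρ * ‖a‖)
    (hN : ρ ^ N ≤ 1 / 2) (he : h * (a ^ N + b ^ N) = b ^ N) : ‖h‖ ≤ 2 * ρ ^ N := by
  have hA : 0 < ‖a‖ ^ N := pow_pos (norm_pos_iff.2 ha) N
  have hB : ‖b‖ ^ N ≤ ρ ^ N * ‖a‖ ^ N := by
    rw [← mul_pow]; exact pow_le_pow_left₀ (norm_nonneg _) hb N
  have h1 : ‖a‖ ^ N - ‖b‖ ^ N ≤ ‖a ^ N + b ^ N‖ := by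
    have := norm_sub_le (a ^ N + b ^ N) (b ^ N)
    simp only [add_sub_cancel_right, norm_pow] at this
    linarith
  have h2 : ‖h‖ * ‖a ^ N + b ^ N‖ = ‖b‖ ^ N := by rw [← norm_mul, he, norm_pow]
  have h3 : ‖a‖ ^ N / 2 ≤ ‖a ^ N + b ^ N‖ := by nlinarith
  have h4 : ‖h‖ * (‖a‖ ^ N / 2) ≤ ρ ^ N * ‖a‖ ^ N :=
    (mul_le_mul_of_nonneg_left h3 (norm_nonneg _)).trans (h2.le.trans hB)
  have h5 : (2 * ρ ^ N - ‖h‖) * ‖a‖ ^ N ≥ 0 := by linarith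
  have := nonneg_of_mul_nonneg_left h5 hA
  linarith

lemma norm_sub_lt_iff_re (w : ℂ) : ‖1 - w‖ < ‖1 + w‖ ↔ 0 < w.re := by
  rw [← sq_lt_sq₀ (norm_nonneg _) (norm_nonneg _), ← Complex.normSq_eq_norm_sq,
    ← Complex.normSq_eq_norm_sq, Complex.normSq_apply, Complex.normSq_apply]
  simp only [Complex.sub_re, Complex.sub_im, Complex.add_re, Complex.add_im, Complex.one_re,
    Complex.one_im]
  constructor <;> intro h <;> nlinarith

lemma norm_add_lt_iff_re (w : ℂ) : ‖1 + w‖ < ‖1 - w‖ ↔ w.re < 0 := by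
  have := norm_sub_lt_iff_re (-w)
  simpa [sub_neg_eq_add, ← sub_eq_add_neg] using this

lemma re_zero_of_root (N : ℕ) (hN : N ≠ 0) (w : ℂ) (h : (1 + w) ^ N + (1 - w) ^ N = 0) :
    w.re = 0 := by
  have h1 : ‖1 + w‖ ^ N = ‖1 - w‖ ^ N := by
    rw [← norm_pow, ← norm_pow, eq_neg_of_add_eq_zero_left h, norm_neg]
  have h2 : ‖1 + w‖ = ‖1 - w‖ := (pow_left_inj₀ (norm_nonneg _) (norm_nonneg _) hN).1 h1
  rcases lt_trichotomy w.re 0 with h | h | h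
  · exact absurd ((norm_add_lt_iff_re w).2 h) (by simp [h2])
  · exact h
  · exact absurd ((norm_sub_lt_iff_re w).2 h) (by simp [h2])

lemma exists_h {X : Type*} [TopologicalSpace X] [CompactSpace X] [Nonempty X]
    (S : Subalgebra ℂ C(X, ℂ)) (hS : IsClosed (S : Set C(X, ℂ))) (x : S)
    (hx : ∀ z, ((x : C(X, ℂ)) z).re ≠ 0) (N : ℕ) (hN : N ≠ 0) :
    ∃ h : S, h * ((1 + x) ^ N + (1 - x) ^ N) = (1 + x) ^ N := by
  haveI := hS
  haveI : CompleteSpace S := hS.completeSpace_coe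
  have hsp : ∀ k ∈ spectrum ℂ x, k.re ≠ 0 := by
    intro k hk hre
    have hb := Subalgebra.spectrum_isBounded_connectedComponentIn S x hk
    have hline : {w : ℂ | w.re = 0} ⊆ (spectrum ℂ (x : C(X, ℂ)))ᶜ := by
      intro w hw hmem
      rw [ContinuousMap.spectrum_eq_range] at hmem
      obtain ⟨z, rfl⟩ := hmem
      exact hx z hw
    have hconn : IsPreconnected {w : ℂ | w.re = 0} := by
      have : Convex ℝ {w : ℂ | w.re = 0} := by
        intro a ha b hb s t _ _ _
        simp only [mem_setOf_eq] at ha hb ⊢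
        simp [ha, hb]
      exact this.isPreconnected
    have hsub := hconn.subset_connectedComponentIn (x := k) hre hline
    obtain ⟨C, hC⟩ := (hb.subset hsub).exists_norm_le
    have := hC (((|C| + 1 : ℝ) : ℂ) * Complex.I) (by simp)
    rw [norm_mul, Complex.norm_I, mul_one, Complex.norm_real, Real.norm_eq_abs,
      abs_of_nonneg (by positivity)] at this
    linarith [le_abs_self C]
  let p : Polynomial ℂ := (1 + Polynomial.X) ^ N + (1 - Polynomial.X) ^ N
  have hp : Polynomial.aeval x p = (1 + x) ^ N + (1 - x) ^ N := by simp [p]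
  have hu : IsUnit (Polynomial.aeval x p) := by
    rw [← spectrum.zero_notMem_iff ℂ,
      spectrum.map_polynomial_aeval_of_nonempty x p (spectrum.nonempty x)]
    rintro ⟨k, hk, h0⟩
    refine hsp k hk (re_zero_of_root N hN k ?_)
    simpa [p] using h0
  rw [hp] at hu
  obtain ⟨u, hu⟩ := hu
  exact ⟨(1 + x) ^ N * ↑u⁻¹, by rw [← hu]; simp⟩

lemma mvEval_contDiff {n : ℕ} (p : MvPolynomial (Fin n) ℂ) : ContDiff ℂ (⊤ : ℕ∞) (mvEval p) :=
  (AnalyticOnNhd.eval_mvPolynomial p).contDiff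

lemma step_approx {n : ℕ} (K L : Set (Fin n → ℂ)) (hKc : IsCompact K) (hLc : IsCompact L)
    (hKne : K.Nonempty) (s : MvPolynomial (Fin n) ℂ)
    (hK : ∀ z ∈ K, 0 < (mvEval s z).re) (hL : ∀ z ∈ L, (mvEval s z).re < 0)
    (P : MvPolynomial (Fin n) ℂ) (η : ℝ) (hη : 0 < η) :
    ∃ Q : MvPolynomial (Fin n) ℂ,
      (∀ z ∈ K, ‖mvEval Q z - mvEval P z‖ < η) ∧ ∀ z ∈ L, ‖mvEval Q z‖ < η := by
  have hXc : IsCompact (K ∪ L) := hKc.union hLc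
  haveI : CompactSpace ↥(K ∪ L) := isCompact_iff_compactSpace.1 hXc
  haveI : Nonempty ↥(K ∪ L) := ⟨⟨hKne.some, Or.inl hKne.some_mem⟩⟩
  let φ : MvPolynomial (Fin n) ℂ →ₐ[ℂ] C(↥(K ∪ L), ℂ) :=
    MvPolynomial.aeval (fun i => ⟨fun x => x.1 i, (continuous_apply i).comp continuous_subtype_val⟩)
  have hφ : ∀ p x, φ p x = mvEval p x.1 := by
    intro p x
    induction p using MvPolynomial.induction_on with
    | C a => simp [mvEval, φ]
    | add p q hp hq => simp only [map_add, ContinuousMap.add_apply, hp, hq]; simp [mvEval]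
    | mul_X p i hp => rw [map_mul, ContinuousMap.mul_apply, hp]; simp [mvEval, φ]
  have hcont : ∀ p : MvPolynomial (Fin n) ℂ, Continuous (mvEval p) :=
    fun p => (mvEval_contDiff p).continuous
  have hs := hcont s
  obtain ⟨ρ₁, h10, h11, h1⟩ := exists_ratio K hKc (fun z => 1 + mvEval s z)
    (fun z => 1 - mvEval s z) (by fun_prop) (by fun_prop)
    (fun z hz => (norm_sub_lt_iff_re _).2 (hK z hz))
  obtain ⟨ρ₂, h20, h21, h2⟩ := exists_ratio L hLc (fun z => 1 - mvEval s z)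
    (fun z => 1 + mvEval s z) (by fun_prop) (by fun_prop)
    (fun z hz => (norm_add_lt_iff_re _).2 (hL z hz))
  obtain ⟨M, hM⟩ := hXc.exists_bound_of_continuousOn (hcont P).continuousOn
  have hM0 : 0 ≤ M := (norm_nonneg _).trans (hM hKne.some (Or.inl hKne.some_mem))
  have ht : ∀ ρ : ℝ, 0 ≤ ρ → ρ < 1 →
      ∀ᶠ N : ℕ in atTop, ρ ^ N ≤ 1 / 2 ∧ M * (2 * ρ ^ N) < η / 2 := by
    intro ρ h0 h1
    have hl := tendsto_pow_atTop_nhds_zero_of_lt_one h0 h1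
    have hl2 : Tendsto (fun N : ℕ => M * (2 * ρ ^ N)) atTop (𝓝 (M * (2 * 0))) :=
      (hl.const_mul 2).const_mul M
    rw [mul_zero, mul_zero] at hl2
    filter_upwards [hl.eventually_lt_const (show (0 : ℝ) < 1 / 2 by norm_num),
      hl2.eventually_lt_const (show (0 : ℝ) < η / 2 by linarith)] with N ha hb
    exact ⟨ha.le, hb⟩
  obtain ⟨N, ⟨⟨hN1, hN1'⟩, ⟨hN2, hN2'⟩⟩, hN0⟩ :=
    (((ht ρ₁ h10 h11).and (ht ρ₂ h20 h21)).and (eventually_ne_atTop 0)).exists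
  let S := φ.range.topologicalClosure
  have hmem : ∀ p, φ p ∈ S := fun p => φ.range.le_topologicalClosure ⟨p, rfl⟩
  obtain ⟨h, hh⟩ := exists_h S φ.range.isClosed_topologicalClosure ⟨φ s, hmem s⟩ (by
    rintro ⟨z, hz⟩
    rw [hφ]
    rcases hz with hz | hz
    · exact (hK z hz).ne'
    · exact (hL z hz).ne) N hN0
  have hpt : ∀ x : ↥(K ∪ L), (h : C(↥(K ∪ L), ℂ)) x *
      ((1 + mvEval s x.1) ^ N + (1 - mvEval s x.1) ^ N) = (1 + mvEval s x.1) ^ N := by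
    intro x
    have := congrArg (fun g : S => (g : C(↥(K ∪ L), ℂ)) x) hh
    simpa [hφ] using this
  have hPh : φ P * (h : C(↥(K ∪ L), ℂ)) ∈ closure (φ.range : Set C(↥(K ∪ L), ℂ)) := by
    have := S.mul_mem (hmem P) h.2
    exact this
  obtain ⟨g, ⟨Q, rfl⟩, hQ⟩ := Metric.mem_closure_iff.1 hPh (η / 2) (by linarith)
  have hQx : ∀ x : ↥(K ∪ L),
      ‖mvEval Q x.1 - mvEval P x.1 * (h : C(↥(K ∪ L), ℂ)) x‖ < η / 2 := by
    intro x
    have := (ContinuousMap.dist_apply_le_dist (f := φ P * (h : C(↥(K ∪ L), ℂ))) (g := φ Q) x).trans_lt hQ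
    rw [dist_comm, dist_eq_norm] at this
    simpa [hφ] using this
  refine ⟨Q, fun z hz => ?_, fun z hz => ?_⟩
  · have e := hpt ⟨z, Or.inl hz⟩
    have a := hQx ⟨z, Or.inl hz⟩
    set t := (h : C(↥(K ∪ L), ℂ)) ⟨z, Or.inl hz⟩
    simp only at e a
    have b : ‖1 - t‖ ≤ 2 * ρ₁ ^ N := by
      refine small_of_eq N (1 + mvEval s z) (1 - mvEval s z) _ ρ₁ ?_ h10 (h1 z hz) hN1 ?_
      · exact norm_pos_iff.1 ((norm_nonneg _).trans_lt ((norm_sub_lt_iff_re _).2 (hK z hz)))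
      · linear_combination -e
    have c : ‖mvEval P z * (1 - t)‖ < η / 2 := by
      rw [norm_mul]
      exact (mul_le_mul (hM z (Or.inl hz)) b (norm_nonneg _) hM0).trans_lt hN1'
    have := norm_sub_le (mvEval Q z - mvEval P z * t) (mvEval P z * (1 - t))
    rw [show mvEval Q z - mvEval P z * t - mvEval P z * (1 - t) = mvEval Q z - mvEval P z by ring]
      at this
    linarith
  · have e := hpt ⟨z, Or.inr hz⟩
    have a := hQx ⟨z, Or.inr hz⟩
    set t := (h : C(↥(K ∪ L), ℂ)) ⟨z, Or.inr hz⟩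
    simp only at e a
    have b : ‖t‖ ≤ 2 * ρ₂ ^ N := by
      refine small_of_eq N (1 - mvEval s z) (1 + mvEval s z) _ ρ₂ ?_ h20 (h2 z hz) hN2 ?_
      · exact norm_pos_iff.1 ((norm_nonneg _).trans_lt ((norm_add_lt_iff_re _).2 (hL z hz)))
      · linear_combination e
    have c : ‖mvEval P z * t‖ < η / 2 := by
      rw [norm_mul]
      exact (mul_le_mul (hM z (Or.inr hz)) b (norm_nonneg _) hM0).trans_lt hN2'
    have := norm_add_le (mvEval Q z - mvEval P z * t) (mvEval P z * t)
    rw [sub_add_cancel] at this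
    linarith

/-- An operator on smooth functions admitting Cauchy-type estimates. -/
def GoodOp {n : ℕ} (T : ((Fin n → ℂ) → ℂ) → ((Fin n → ℂ) → ℂ)) : Prop :=
  (∀ g, ContDiff ℂ (⊤ : ℕ∞) g → ContDiff ℂ (⊤ : ℕ∞) (T g)) ∧
  ∀ (S : Set (Fin n → ℂ)) (r ε : ℝ), 0 < r → 0 < ε → ∃ η : ℝ, 0 < η ∧
    ∀ g, ContDiff ℂ (⊤ : ℕ∞) g → (∀ z ∈ Metric.cthickening r S, ‖g z‖ ≤ η) →
      ∀ z ∈ S, ‖T g z‖ ≤ ε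

lemma goodOp_id {n : ℕ} : GoodOp (n := n) (fun g => g) :=
  ⟨fun _ h => h, fun S r ε _ hε => ⟨ε, hε, fun _ _ h z hz =>
    h z (Metric.self_subset_cthickening S hz)⟩⟩

lemma GoodOp.comp {n : ℕ} {T U : ((Fin n → ℂ) → ℂ) → ((Fin n → ℂ) → ℂ)} (hT : GoodOp T)
    (hU : GoodOp U) : GoodOp (fun g => T (U g)) := by
  refine ⟨fun g hg => hT.1 _ (hU.1 _ hg), fun S r ε hr hε => ?_⟩
  obtain ⟨η₁, h1, H1⟩ := hT.2 S (r / 2) ε (by linarith) hε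
  obtain ⟨η₂, h2, H2⟩ := hU.2 (Metric.cthickening (r / 2) S) (r / 2) η₁ (by linarith) h1
  refine ⟨η₂, h2, fun g hg hz => H1 _ (hU.1 _ hg) (H2 g hg fun z hzz => hz z ?_)⟩
  have := Metric.cthickening_cthickening_subset (by linarith : 0 ≤ r / 2) (by linarith : 0 ≤ r / 2) S hzz
  rwa [add_halves] at this

lemma goodOp_pd {n : ℕ} (i : Fin n) : GoodOp (pd i) := by
  constructor
  · intro g hg
    exact (hg.fderiv_right (m := ((⊤ : ℕ∞) : WithTop ℕ∞)) (by norm_num)).clm_apply contDiff_const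
  · intro S r ε hr hε
    refine ⟨ε * r, by positivity, fun g hg hz z hzS => ?_⟩
    have hgd : Differentiable ℂ g := hg.differentiable (by simp)
    let k : ℂ → (Fin n → ℂ) := fun t => z + t • (Pi.single i 1 : Fin n → ℂ)
    have hk : ∀ t, HasDerivAt k (Pi.single i 1) t := by
      intro t
      have := ((hasDerivAt_id t).smul_const (Pi.single i 1 : Fin n → ℂ)).const_add z
      rw [one_smul] at this
      exact this
    have hk0 : k 0 = z := by simp [k]
    have hd : HasDerivAt (fun t => g (k t)) (fderiv ℂ g z (Pi.single i 1)) 0 := by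
      have := (hgd (k 0)).hasFDerivAt.comp_hasDerivAt 0 (hk 0)
      rw [hk0] at this
      exact this
    have hkd : Differentiable ℂ (fun t => g (k t)) :=
      hgd.comp (fun t => (hk t).differentiableAt)
    have := Complex.norm_deriv_le_of_forall_mem_sphere_norm_le (c := 0) (C := ε * r) hr
      hkd.diffContOnCl (fun t ht => hz _ (by
        refine Metric.mem_cthickening_of_dist_le _ z _ _ hzS ?_
        rw [dist_eq_norm]
        simp only [k, add_sub_cancel_left, norm_smul]
        have : ‖t‖ = r := by simpa using ht
        rw [this, Pi.norm_single]; simp))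
    rw [hd.deriv, mul_div_cancel_right₀ _ hr.ne'] at this
    exact this

lemma goodOp_iterate {n : ℕ} (i : Fin n) (k : ℕ) : GoodOp ((pd i)^[k]) := by
  induction k with
  | zero => exact goodOp_id
  | succ k ih => exact ih.comp (goodOp_pd i)

lemma goodOp_Dml {n : ℕ} (ℓ : Fin n → ℕ) : GoodOp (Dml ℓ) := by
  have : ∀ l : List (Fin n), GoodOp (fun f => l.foldr (fun i g => (pd i)^[ℓ i] g) f) := by
    intro l
    induction l with
    | nil => exact goodOp_id
    | cons a l ih => exact (goodOp_iterate a (ℓ a)).comp ih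
  exact this _

lemma exists_common {n : ℕ} (F : Finset (Fin n → ℕ)) (S : Set (Fin n → ℂ)) (r ε : ℝ)
    (hr : 0 < r) (hε : 0 < ε) : ∃ η : ℝ, 0 < η ∧ ∀ ℓ ∈ F,
    ∀ g, ContDiff ℂ (⊤ : ℕ∞) g → (∀ z ∈ Metric.cthickening r S, ‖g z‖ ≤ η) →
      ∀ z ∈ S, ‖Dml ℓ g z‖ ≤ ε := by
  classical
  induction F using Finset.induction_on with
  | empty => exact ⟨1, one_pos, by simp⟩
  | insert a F _ ih =>
    obtain ⟨η₁, h1, H1⟩ := ih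
    obtain ⟨η₂, h2, H2⟩ := (goodOp_Dml a).2 S r ε hr hε
    refine ⟨min η₁ η₂, lt_min h1 h2, fun ℓ hℓ g hg hz => ?_⟩
    rcases Finset.mem_insert.1 hℓ with rfl | hℓ
    · exact H2 g hg fun z h => (hz z h).trans (min_le_right _ _)
    · exact H1 ℓ hℓ g hg fun z h => (hz z h).trans (min_le_left _ _)


/-- Lemma 3.2. -/
theorem lem3_2 (n : ℕ) (Ω : Set (Fin n → ℂ)) (hΩo : IsOpen Ω) (hΩcv : Convex ℝ Ω)
    (K : Set (Fin n → ℂ)) (hKcpt : IsCompact K) (hKcv : Convex ℝ K)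
    (hKΩ : K ∩ closure Ω = ∅)
    (P : MvPolynomial (Fin n) ℂ) (δ ε : ℝ) (hδ : 0 < δ) (hε : 0 < ε)
    (F : Finset (Fin n → ℕ)) :
    ∃ Q : MvPolynomial (Fin n) ℂ,
      (∀ z ∈ K, ‖mvEval Q z - mvEval P z‖ < ε) ∧
      ∀ ℓ ∈ F, ∀ z ∈ closure Ω ∩ {z : Fin n → ℂ | ‖z‖ ≤ δ}, ‖Dml ℓ (mvEval Q) z‖ < ε := by
  have hKL : Disjoint K (closure Ω) := Set.disjoint_iff_inter_eq_empty.2 hKΩ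
  set S : Set (Fin n → ℂ) := closure Ω ∩ {z : Fin n → ℂ | ‖z‖ ≤ δ} with hSdef
  have hball : {z : Fin n → ℂ | ‖z‖ ≤ δ} = Metric.closedBall 0 δ := by
    ext z; simp
  have hSc : IsCompact S := by
    rw [hSdef, hball]
    exact (isCompact_closedBall _ _).inter_left isClosed_closure
  have hScv : Convex ℝ S := by
    rw [hSdef, hball]
    exact hΩcv.closure.inter (convex_closedBall _ _)
  rcases K.eq_empty_or_nonempty with rfl | hKne
  · obtain ⟨η, hη, H⟩ := exists_common F S 1 (ε / 2) one_pos (by linarith)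
    refine ⟨0, by simp, fun ℓ hℓ z hz => ?_⟩
    have := H ℓ hℓ (mvEval 0) (mvEval_contDiff 0) (fun z _ => by simp [mvEval, hη.le]) z hz
    linarith
  have hKS : Disjoint K S := hKL.mono_right inter_subset_left
  obtain ⟨r, hr, hdis⟩ := hKS.exists_cthickenings hKcpt hSc.isClosed
  have hdis' : Disjoint (Metric.cthickening r S) K :=
    (hdis.mono_left (Metric.self_subset_cthickening K)).symm
  obtain ⟨f, u, v, hu, huv, hv⟩ := RCLike.geometric_hahn_banach_compact_closed (𝕜 := ℂ)
    (hScv.cthickening r) hSc.cthickening hKcv hKcpt.isClosed hdis'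
  let s : MvPolynomial (Fin n) ℂ :=
    (∑ i, MvPolynomial.C (f (Pi.single i 1)) * MvPolynomial.X i) - MvPolynomial.C (u : ℂ)
  have hs : ∀ z, mvEval s z = f z - u := by
    intro z
    have hz : f z = ∑ i, f (Pi.single i 1) * z i := by
      conv_lhs => rw [pi_eq_sum_univ' z]
      simp [map_sum, mul_comm, Pi.single]
    simp [s, mvEval, hz]
  obtain ⟨η, hη, H⟩ := exists_common F S r (ε / 2) hr (by linarith)
  obtain ⟨Q, hQ1, hQ2⟩ := step_approx K (Metric.cthickening r S) hKcpt hSc.cthickening hKne s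
    (fun z hz => by
      have := hv z hz
      simp only [RCLike.re_to_complex] at this
      rw [hs]; simp; linarith)
    (fun z hz => by
      have := hu z hz
      simp only [RCLike.re_to_complex] at this
      rw [hs]; simp; linarith) P (min ε η) (lt_min hε hη)
  refine ⟨Q, fun z hz => (hQ1 z hz).trans_le (min_le_left _ _), fun ℓ hℓ z hz => ?_⟩
  have := H ℓ hℓ (mvEval Q) (mvEval_contDiff Q)
    (fun z hz => (hQ2 z hz).le.trans (min_le_right _ _)) z hz
  linarith

end
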